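/- Let l be a loss function that is c-admissible with respect to the linear hypothesis class, meaning |l(y, h(x)) − l(y, h'(x))| ≤ c|h(x) − h'(x)| for all linear hypotheses h, h' and examples (x,y). Then for each fixed (y_{ti}), the empirical Rademacher complexity of the loss class {(t,i) ↦ l(y_{ti}, ⟨a_t + a_0, Uᵀ x_{ti}⟩) : ‖A‖_{2,1}² ≤ T/γ, ‖a_0‖₂² ≤ 1/β, U orthogonal} over the sample {x_{ti}} is at most 2c(√(T/γ) + √(1/β)) √(∑_{t=1}^T m_t S(X_t)), where S(X_t) = (1/m_t)∑_{i=1}^{m_t} ‖x_{ti}‖₂². -/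

import Mathlib

open Matrix

/-- The L2,1-norm of a matrix: the sum of the Euclidean norms of its rows. -/
noncomputable def l21 {d T : ℕ} (A : Matrix (Fin d) (Fin T) ℝ) : ℝ :=
  ∑ i, Real.sqrt (∑ t, A i t ^ 2)

/-!
Write `⟨a_t + a₀, Uᵀ x⟩ = ⟨U a_t, x⟩ + ⟨U a₀, x⟩`. As the Frobenius norm is at most the `L2,1`-norm
and is invariant under `U`, both terms are evaluations of a bounded linear functional on a Hilbert
space: the first on `ℝ^d ⊕ ⋯ ⊕ ℝ^d` (one summand per task), at `x_{ti}` placed in the `t`-th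
summand, the second on `ℝ^d`. Cauchy–Schwarz and orthogonality of the signs bound the Rademacher
average of each, and the contraction principle removes the loss.
-/

open scoped BigOperators NNReal RealInnerProductSpace

open WithLp (toLp)

/-- The real sign encoded by a Boolean: `true` is `1` and `false` is `-1`. -/
def rademacherSign (b : Bool) : ℝ := if b then 1 else -1

lemma rademacherSign_not (b : Bool) : rademacherSign (!b) = -rademacherSign b := by
  cases b <;> simp [rademacherSign]

lemma rademacherSign_mul_self (b : Bool) : rademacherSign b * rademacherSign b = 1 := by
  cases b <;> simp [rademacherSign]

lemma abs_rademacherSign (b : Bool) : |rademacherSign b| = 1 := by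
  cases b <;> simp [rademacherSign]

section FlipAt

variable {ι : Type*} [DecidableEq ι]

/-- The involution of sign patterns that flips coordinate `k`. Pairing `s` with `flipAt k s`
conditions an average over signs on all coordinates but `k`. -/
def flipAt (k : ι) : Equiv.Perm (ι → Bool) :=
  Function.Involutive.toPerm (fun s => Function.update s k (!s k)) fun s => by simp

lemma flipAt_apply_self (k : ι) (s : ι → Bool) : flipAt k s k = !s k := by
  simp [flipAt, Function.Involutive.toPerm]

lemma flipAt_apply_of_ne {k i : ι} (h : i ≠ k) (s : ι → Bool) : flipAt k s i = s i := by
  simp [flipAt, Function.Involutive.toPerm, h]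

variable [Fintype ι]

lemma sum_rademacherSign_mul (k : ι) (s : ι → Bool) (f : ι → ℝ) :
    ∑ i, rademacherSign (s i) * f i =
      ∑ i ∈ Finset.univ.erase k, rademacherSign (s i) * f i + rademacherSign (s k) * f k :=
  (Finset.sum_erase_add _ _ (Finset.mem_univ k)).symm

lemma sum_rademacherSign_flipAt_mul (k : ι) (s : ι → Bool) (f : ι → ℝ) :
    ∑ i, rademacherSign (flipAt k s i) * f i =
      ∑ i ∈ Finset.univ.erase k, rademacherSign (s i) * f i - rademacherSign (s k) * f k := by
  rw [sum_rademacherSign_mul k, flipAt_apply_self, rademacherSign_not, neg_mul, ← sub_eq_add_neg]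
  congr 1
  exact Finset.sum_congr rfl fun i hi => by rw [flipAt_apply_of_ne (Finset.ne_of_mem_erase hi)]

lemma expect_comp_flipAt (k : ι) (F : (ι → Bool) → ℝ) : 𝔼 s, F (flipAt k s) = 𝔼 s, F s :=
  Fintype.expect_equiv (flipAt k) _ _ fun _ => rfl

lemma expect_le_expect_of_add_flipAt_le (k : ι) {F G : (ι → Bool) → ℝ}
    (h : ∀ s, F s + F (flipAt k s) ≤ G s + G (flipAt k s)) : 𝔼 s, F s ≤ 𝔼 s, G s := by
  have hsum := Finset.expect_le_expect fun s (_ : s ∈ Finset.univ) => h s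
  rw [Finset.expect_add_distrib, Finset.expect_add_distrib, expect_comp_flipAt,
    expect_comp_flipAt] at hsum
  linarith

lemma expect_rademacherSign_mul (i j : ι) :
    𝔼 s : ι → Bool, rademacherSign (s i) * rademacherSign (s j) = if i = j then 1 else 0 := by
  split_ifs with hij
  · subst hij
    simp only [rademacherSign_mul_self, Fintype.expect_one]
  · have hflip := expect_comp_flipAt i fun s : ι → Bool =>
      rademacherSign (s i) * rademacherSign (s j)
    simp only [flipAt_apply_self, flipAt_apply_of_ne (Ne.symm hij), rademacherSign_not, neg_mul,
      Finset.expect_neg_distrib] at hflip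
    linarith

end FlipAt

section SecondMoment

variable {ι E : Type*} [Fintype ι] [DecidableEq ι] [NormedAddCommGroup E] [InnerProductSpace ℝ E]

lemma expect_norm_sum_rademacherSign_smul_sq (v : ι → E) :
    𝔼 s : ι → Bool, ‖∑ i, rademacherSign (s i) • v i‖ ^ 2 = ∑ i, ‖v i‖ ^ 2 := by
  have hexpand : ∀ s : ι → Bool, ‖∑ i, rademacherSign (s i) • v i‖ ^ 2 =
      ∑ i, ∑ j, rademacherSign (s j) * rademacherSign (s i) * ⟪v i, v j⟫ := fun s => by
    rw [← real_inner_self_eq_norm_sq, sum_inner]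
    simp only [inner_sum, real_inner_smul_left, real_inner_smul_right, mul_assoc]
  simp only [hexpand, Finset.expect_sum_comm, ← Finset.expect_mul, expect_rademacherSign_mul,
    ite_mul, one_mul, zero_mul, Finset.sum_ite_eq', Finset.mem_univ, if_true,
    real_inner_self_eq_norm_sq]

lemma expect_norm_sum_rademacherSign_smul_le (v : ι → E) :
    𝔼 s : ι → Bool, ‖∑ i, rademacherSign (s i) • v i‖ ≤ √(∑ i, ‖v i‖ ^ 2) := by
  refine Real.le_sqrt_of_sq_le ?_
  have hcauchy := Finset.expect_mul_sq_le_sq_mul_sq Finset.univ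
    (fun s : ι → Bool => ‖∑ i, rademacherSign (s i) • v i‖) fun _ => 1
  simpa only [mul_one, one_pow, Fintype.expect_one, expect_norm_sum_rademacherSign_smul_sq]
    using hcauchy

end SecondMoment

section RademacherAverage

variable {ι H : Type*} [Fintype ι]

lemma bddAbove_range_sum_mul {F : H → ι → ℝ}
    (hF : ∀ i, Bornology.IsBounded (Set.range fun h => F h i)) (w : ι → ℝ) :
    BddAbove (Set.range fun h => ∑ i, w i * F h i) := by
  choose B hB using fun i => isBounded_iff_forall_norm_le.mp (hF i)
  refine ⟨∑ i, |w i| * B i, ?_⟩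
  rintro _ ⟨h, rfl⟩
  refine Finset.sum_le_sum fun i _ => (le_abs_self _).trans ?_
  rw [abs_mul]
  exact mul_le_mul_of_nonneg_left (hB i _ ⟨h, rfl⟩) (abs_nonneg _)

variable [DecidableEq ι]

/-- The unnormalized Rademacher average `E_σ sup_h ∑ i, σ i * F h i` of the class
`{F h : h ∈ H}` of real functions on the sample `ι`, without the conventional factor `2`. The
class is an indexed family so that two classes can be compared index by index. A supremum that
is not bounded above takes the junk value `0`. -/
noncomputable def rademacherAverage (F : H → ι → ℝ) : ℝ :=
  𝔼 s : ι → Bool, ⨆ h, ∑ i, rademacherSign (s i) * F h i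

lemma rademacherAverage_const_mul {c : ℝ} (hc : 0 ≤ c) (F : H → ι → ℝ) :
    rademacherAverage (fun h i => c * F h i) = c * rademacherAverage F := by
  simp only [rademacherAverage, Finset.mul_expect, Real.mul_iSup_of_nonneg hc, Finset.mul_sum,
    mul_left_comm]

lemma rademacherAverage_sigma {τ : Type*} [Fintype τ] [DecidableEq τ] {α : τ → Type*}
    [∀ t, Fintype (α t)] [∀ t, DecidableEq (α t)] (F : H → (Σ t, α t) → ℝ) :
    rademacherAverage F =
      (∑ s : (t : τ) → α t → Bool, ⨆ h, ∑ t, ∑ i, rademacherSign (s t i) * F h ⟨t, i⟩) /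
        2 ^ ∑ t, Fintype.card (α t) := by
  rw [rademacherAverage, Fintype.expect_eq_sum_div_card,
    ← Equiv.sum_comp (Equiv.piCurry fun (t : τ) (_ : α t) => Bool)]
  simp [Fintype.sum_sigma, Sigma.curry]

variable [Nonempty H]

lemma rademacherAverage_add_le {F G : H → ι → ℝ}
    (hF : ∀ i, Bornology.IsBounded (Set.range fun h => F h i))
    (hG : ∀ i, Bornology.IsBounded (Set.range fun h => G h i)) :
    rademacherAverage (fun h i => F h i + G h i) ≤ rademacherAverage F + rademacherAverage G := by
  simp only [rademacherAverage, ← Finset.expect_add_distrib]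
  refine Finset.expect_le_expect fun s _ => ciSup_le fun h => ?_
  simp only [mul_add, Finset.sum_add_distrib]
  exact add_le_add (le_ciSup (bddAbove_range_sum_mul hF _) h)
    (le_ciSup (bddAbove_range_sum_mul hG _) h)

end RademacherAverage

section Contraction

variable {ι H : Type*} [Nonempty H]

lemma ciSup_add_add_ciSup_sub_le {g a b : H → ℝ}
    (hadd : BddAbove (Set.range fun h => g h + b h))
    (hsub : BddAbove (Set.range fun h => g h - b h))
    (hab : ∀ h h₂, |a h - a h₂| ≤ |b h - b h₂|) :
    (⨆ h, (g h + a h)) + ⨆ h, (g h - a h) ≤ (⨆ h, (g h + b h)) + ⨆ h, (g h - b h) := by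
  have hpair : ∀ h h₂, (g h + a h) + (g h₂ - a h₂) ≤
      (⨆ h, (g h + b h)) + ⨆ h, (g h - b h) := by
    intro h h₂
    have ha : a h - a h₂ ≤ |b h - b h₂| := (le_abs_self _).trans (hab h h₂)
    -- The sign of `b h - b h₂` decides which of `h`, `h₂` is used in which supremum.
    rcases abs_cases (b h - b h₂) with ⟨habs, _⟩ | ⟨habs, _⟩
    · linarith [le_ciSup hadd h, le_ciSup hsub h₂]
    · linarith [le_ciSup hadd h₂, le_ciSup hsub h]
  rw [← le_sub_iff_add_le]
  refine ciSup_le fun h => ?_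
  rw [le_sub_comm]
  exact ciSup_le fun h₂ => le_sub_iff_add_le'.mpr (hpair h h₂)

variable [Fintype ι] [DecidableEq ι]

lemma rademacherAverage_le_of_eq_of_ne {F G : H → ι → ℝ} (k : ι)
    (hG : ∀ i, Bornology.IsBounded (Set.range fun h => G h i))
    (hne : ∀ h i, i ≠ k → F h i = G h i)
    (hk : ∀ h h', |F h k - F h' k| ≤ |G h k - G h' k|) :
    rademacherAverage F ≤ rademacherAverage G := by
  refine expect_le_expect_of_add_flipAt_le k fun s => ?_
  have hrest : ∀ h, ∑ i ∈ Finset.univ.erase k, rademacherSign (s i) * F h i =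
      ∑ i ∈ Finset.univ.erase k, rademacherSign (s i) * G h i := fun h =>
    Finset.sum_congr rfl fun i hi => by rw [hne h i (Finset.ne_of_mem_erase hi)]
  have hadd := bddAbove_range_sum_mul hG fun i => rademacherSign (s i)
  have hsub := bddAbove_range_sum_mul hG fun i => rademacherSign (flipAt k s i)
  simp only [sum_rademacherSign_flipAt_mul] at hsub ⊢
  simp only [sum_rademacherSign_mul k s] at hadd ⊢
  simp only [hrest]
  refine ciSup_add_add_ciSup_sub_le hadd hsub fun h h' => ?_
  rw [← mul_sub, ← mul_sub, abs_mul, abs_mul, abs_rademacherSign, one_mul, one_mul]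
  exact hk h h'

lemma rademacherAverage_le_of_abs_sub_le {F G : H → ι → ℝ}
    (hG : ∀ i, Bornology.IsBounded (Set.range fun h => G h i))
    (hFG : ∀ h h' i, |F h i - F h' i| ≤ |G h i - G h' i|) :
    rademacherAverage F ≤ rademacherAverage G := by
  have hF : ∀ i, Bornology.IsBounded (Set.range fun h => F h i) := fun i =>
    let ⟨C, hC⟩ := Metric.isBounded_range_iff.mp (hG i)
    Metric.isBounded_range_iff.mpr ⟨C, fun h h' => (hFG h h' i).trans (hC h h')⟩
  have hybrid : ∀ S : Finset ι,
      rademacherAverage F ≤ rademacherAverage fun h => S.piecewise (G h) (F h) := by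
    intro S
    induction S using Finset.induction_on with
    | empty => simp only [Finset.piecewise_empty, le_refl]
    | insert k S hk ih =>
      refine ih.trans (rademacherAverage_le_of_eq_of_ne k (fun i => ?_) (fun h i hi => ?_) ?_)
      · by_cases hi : i ∈ insert k S
        · simpa only [Finset.piecewise_eq_of_mem _ _ _ hi] using hG i
        · simpa only [Finset.piecewise_eq_of_notMem _ _ _ hi] using hF i
      · exact (S.piecewise_insert_of_ne _ _ hi).symm
      · simpa [hk] using fun h h' => hFG h h' k
  simpa only [Finset.piecewise_univ] using hybrid Finset.univ

lemma rademacherAverage_comp_le {K : ℝ≥0} {φ : ι → ℝ → ℝ} (hφ : ∀ i, LipschitzWith K (φ i))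
    {F : H → ι → ℝ} (hF : ∀ i, Bornology.IsBounded (Set.range fun h => F h i)) :
    rademacherAverage (fun h i => φ i (F h i)) ≤ K * rademacherAverage F := by
  rw [← rademacherAverage_const_mul K.coe_nonneg]
  refine rademacherAverage_le_of_abs_sub_le (fun i => ?_) fun h h' i => ?_
  · simpa only [← Set.range_comp, Function.comp_def, smul_eq_mul] using
      (lipschitzWith_smul (K : ℝ)).isBounded_image (hF i)
  · rw [← mul_sub, abs_mul, abs_of_nonneg K.coe_nonneg]
    exact (hφ i).dist_le_mul _ _

end Contraction

section LinearClass

variable {ι τ H E : Type*} [NormedAddCommGroup E] [InnerProductSpace ℝ E] {r r₀ : ℝ}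

lemma isBounded_range_inner {w : H → E} (hw : ∀ h, ‖w h‖ ≤ r) (v : E) :
    Bornology.IsBounded (Set.range fun h => ⟪w h, v⟫) := by
  refine isBounded_iff_forall_norm_le.mpr ⟨r * ‖v‖, ?_⟩
  rintro _ ⟨h, rfl⟩
  exact (norm_inner_le_norm _ _).trans (mul_le_mul_of_nonneg_right (hw h) (norm_nonneg v))

variable [Fintype ι] [DecidableEq ι] [Nonempty H] [Fintype τ]

lemma rademacherAverage_inner_le {w : H → E} (hw : ∀ h, ‖w h‖ ≤ r) (v : ι → E) :
    rademacherAverage (fun h i => ⟪w h, v i⟫) ≤ r * √(∑ i, ‖v i‖ ^ 2) := by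
  have hr : 0 ≤ r := (norm_nonneg _).trans (hw (Classical.arbitrary H))
  refine le_trans ?_ (mul_le_mul_of_nonneg_left (expect_norm_sum_rademacherSign_smul_le v) hr)
  rw [Finset.mul_expect]
  refine Finset.expect_le_expect fun s _ => ciSup_le fun h => ?_
  calc ∑ i, rademacherSign (s i) * ⟪w h, v i⟫
      = ⟪w h, ∑ i, rademacherSign (s i) • v i⟫ := by
        simp only [inner_sum, real_inner_smul_right]
    _ ≤ ‖w h‖ * ‖∑ i, rademacherSign (s i) • v i‖ := real_inner_le_norm _ _
    _ ≤ r * ‖∑ i, rademacherSign (s i) • v i‖ :=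
        mul_le_mul_of_nonneg_right (hw h) (norm_nonneg _)

lemma rademacherAverage_inner_task_le {a : H → PiLp 2 fun _ : τ => E} (ha : ∀ h, ‖a h‖ ≤ r)
    (task : ι → τ) (v : ι → E) :
    rademacherAverage (fun h i => ⟪a h (task i), v i⟫) ≤ r * √(∑ i, ‖v i‖ ^ 2) := by
  classical
  have hinner : ∀ h i, ⟪a h (task i), v i⟫ = ⟪a h, PiLp.single 2 (task i) (v i)⟫ := fun h i => by
    rw [PiLp.inner_apply, Finset.sum_eq_single (task i)] <;> simp +contextual
  simpa only [hinner, PiLp.norm_single] using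
    rademacherAverage_inner_le ha fun i => PiLp.single 2 (task i) (v i)

lemma rademacherAverage_inner_task_add_le {a : H → PiLp 2 fun _ : τ => E} {a₀ : H → E}
    (ha : ∀ h, ‖a h‖ ≤ r) (ha₀ : ∀ h, ‖a₀ h‖ ≤ r₀) (task : ι → τ) (v : ι → E) :
    rademacherAverage (fun h i => ⟪a h (task i) + a₀ h, v i⟫) ≤
      (r + r₀) * √(∑ i, ‖v i‖ ^ 2) := by
  simp only [inner_add_left, add_mul]
  exact (rademacherAverage_add_le
      (fun i => isBounded_range_inner (fun h => (PiLp.norm_apply_le _ _).trans (ha h)) (v i))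
      fun i => isBounded_range_inner ha₀ (v i)).trans
    (add_le_add (rademacherAverage_inner_task_le ha task v) (rademacherAverage_inner_le ha₀ v))

end LinearClass

lemma norm_toLp_mulVec {n p : Type*} [Fintype n] [Fintype p] [DecidableEq p] {U : Matrix n p ℝ}
    (hU : Uᵀ * U = 1) (b : p → ℝ) : ‖toLp 2 (U *ᵥ b)‖ = ‖toLp 2 b‖ := by
  have hdot : (U *ᵥ b) ⬝ᵥ (U *ᵥ b) = b ⬝ᵥ b := by
    rw [dotProduct_mulVec, ← mulVec_transpose, mulVec_mulVec, hU, one_mulVec]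
  rw [← sq_eq_sq₀ (norm_nonneg _) (norm_nonneg _), EuclideanSpace.real_norm_sq_eq,
    EuclideanSpace.real_norm_sq_eq]
  simpa only [dotProduct, ← sq] using hdot

lemma sum_sq_le_l21_sq {d T : ℕ} (A : Matrix (Fin d) (Fin T) ℝ) :
    ∑ j, ∑ t, A j t ^ 2 ≤ l21 A ^ 2 := by
  have h := Finset.sum_sq_le_sq_sum_of_nonneg (s := Finset.univ)
    (f := fun j => √(∑ t, A j t ^ 2)) fun _ _ => Real.sqrt_nonneg _
  simpa only [l21, Real.sq_sqrt (Finset.sum_nonneg fun _ _ => sq_nonneg _)] using h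

/-- A hypothesis `(A, a₀, U)` of linear multitask learning, with `R` and `R₀` bounding the
squares of the `L2,1`-norm of `A` and of the Euclidean norm of `a₀`. -/
structure MultitaskHypothesis (d T : ℕ) (R R₀ : ℝ) where
  A : Matrix (Fin d) (Fin T) ℝ
  a₀ : Fin d → ℝ
  U : Matrix (Fin d) (Fin d) ℝ
  l21_sq_le : l21 A ^ 2 ≤ R
  sum_sq_le : ∑ j, a₀ j ^ 2 ≤ R₀
  transpose_mul_self : Uᵀ * U = 1

namespace MultitaskHypothesis

variable {d T : ℕ} {R R₀ : ℝ}

lemma nonempty (hR : 0 ≤ R) (hR₀ : 0 ≤ R₀) : Nonempty (MultitaskHypothesis d T R R₀) :=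
  ⟨{ A := 0, a₀ := 0, U := 1
     l21_sq_le := by simpa [l21] using hR
     sum_sq_le := by simpa using hR₀
     transpose_mul_self := by simp }⟩

/-- The prediction `⟨a_t + a₀, Uᵀ x⟩` of a hypothesis for the input `x` of task `t`. -/
def predict (θ : MultitaskHypothesis d T R R₀) (t : Fin T) (x : Fin d → ℝ) : ℝ :=
  (fun j => θ.A j t + θ.a₀ j) ⬝ᵥ θ.Uᵀ *ᵥ x

/-- The rotated task weights `U a_t`, normed by the Frobenius norm of `U A`. -/
noncomputable def taskWeights (θ : MultitaskHypothesis d T R R₀) :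
    PiLp 2 fun _ : Fin T => EuclideanSpace ℝ (Fin d) :=
  toLp 2 fun t => toLp 2 (θ.U *ᵥ fun j => θ.A j t)

/-- The rotated common weights `U a₀`. -/
noncomputable def commonWeights (θ : MultitaskHypothesis d T R R₀) : EuclideanSpace ℝ (Fin d) :=
  toLp 2 (θ.U *ᵥ θ.a₀)

lemma norm_taskWeights_le (θ : MultitaskHypothesis d T R R₀) : ‖θ.taskWeights‖ ≤ √R := by
  refine Real.le_sqrt_of_sq_le (le_trans ?_ θ.l21_sq_le)
  simp only [taskWeights, PiLp.norm_sq_eq_of_L2, norm_toLp_mulVec θ.transpose_mul_self,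
    Real.norm_eq_abs, sq_abs]
  rw [Finset.sum_comm]
  exact sum_sq_le_l21_sq θ.A

lemma norm_commonWeights_le (θ : MultitaskHypothesis d T R R₀) : ‖θ.commonWeights‖ ≤ √R₀ := by
  refine Real.le_sqrt_of_sq_le ?_
  rw [commonWeights, norm_toLp_mulVec θ.transpose_mul_self, EuclideanSpace.real_norm_sq_eq]
  exact θ.sum_sq_le

lemma predict_eq_inner (θ : MultitaskHypothesis d T R R₀) (t : Fin T) (x : Fin d → ℝ) :
    θ.predict t x = ⟪θ.taskWeights t + θ.commonWeights, toLp 2 x⟫ := by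
  have hrotate : θ.predict t x = (θ.U *ᵥ (fun j => θ.A j t) + θ.U *ᵥ θ.a₀) ⬝ᵥ x := by
    rw [predict, dotProduct_mulVec, vecMul_transpose, ← mulVec_add]
    rfl
  rw [hrotate, taskWeights, commonWeights, ← WithLp.toLp_add, EuclideanSpace.inner_toLp_toLp,
    star_trivial, dotProduct_comm]

lemma isBounded_range_predict (t : Fin T) (x : Fin d → ℝ) :
    Bornology.IsBounded (Set.range fun θ : MultitaskHypothesis d T R R₀ => θ.predict t x) := by
  simp only [predict_eq_inner]
  exact isBounded_range_inner (fun θ => norm_add_le_of_le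
    ((PiLp.norm_apply_le _ _).trans θ.norm_taskWeights_le) θ.norm_commonWeights_le) _

lemma rademacherAverage_loss_le {ι : Type*} [Fintype ι] [DecidableEq ι] (hR : 0 ≤ R)
    (hR₀ : 0 ≤ R₀) (task : ι → Fin T) (x : ι → Fin d → ℝ) {K : ℝ≥0} {φ : ι → ℝ → ℝ}
    (hφ : ∀ i, LipschitzWith K (φ i)) :
    rademacherAverage
        (fun (θ : MultitaskHypothesis d T R R₀) i => φ i (θ.predict (task i) (x i))) ≤
      K * ((√R + √R₀) * √(∑ i, ∑ j, x i j ^ 2)) := by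
  have := nonempty (d := d) (T := T) hR hR₀
  refine (rademacherAverage_comp_le hφ fun i => isBounded_range_predict _ _).trans ?_
  refine mul_le_mul_of_nonneg_left ?_ K.coe_nonneg
  simpa only [predict_eq_inner, EuclideanSpace.real_norm_sq_eq] using
    rademacherAverage_inner_task_add_le norm_taskWeights_le norm_commonWeights_le task
      fun i => toLp 2 (x i)

lemma sSup_setOf_eq_iSup (f : Matrix (Fin d) (Fin T) ℝ → (Fin d → ℝ) →
    Matrix (Fin d) (Fin d) ℝ → ℝ) :
    sSup {v : ℝ | ∃ A a₀ U, l21 A ^ 2 ≤ R ∧ ∑ j, a₀ j ^ 2 ≤ R₀ ∧ Uᵀ * U = 1 ∧ v = f A a₀ U} =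
      ⨆ θ : MultitaskHypothesis d T R R₀, f θ.A θ.a₀ θ.U := by
  refine congrArg sSup (Set.ext fun v => ⟨?_, ?_⟩)
  · rintro ⟨A, a₀, U, hA, ha₀, hU, rfl⟩
    exact ⟨⟨A, a₀, U, hA, ha₀, hU⟩, rfl⟩
  · rintro ⟨θ, rfl⟩
    exact ⟨θ.A, θ.a₀, θ.U, θ.l21_sq_le, θ.sum_sq_le, θ.transpose_mul_self, rfl⟩

end MultitaskHypothesis

lemma card_mul_sum_div_card {α : Type*} [Fintype α] (f : α → ℝ) :
    (Fintype.card α : ℝ) * ((∑ i, f i) / Fintype.card α) = ∑ i, f i := by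
  rcases isEmpty_or_nonempty α with _ | _
  · simp
  · exact mul_div_cancel₀ _ (Nat.cast_ne_zero.mpr Fintype.card_ne_zero)

theorem loss_class_rademacher_bound_general {d T : ℕ} {γ β : ℝ} (hγ : 0 < γ) (hβ : 0 < β)
    {𝒴 : Type*} {l : 𝒴 → ℝ → ℝ} {c : ℝ≥0} (hl : ∀ y, LipschitzWith c (l y)) (m : Fin T → ℕ)
    (x : (t : Fin T) → Fin (m t) → Fin d → ℝ) (y : (t : Fin T) → Fin (m t) → 𝒴) :
    2 * (∑ s : (t : Fin T) → Fin (m t) → Bool,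
        sSup {v : ℝ |
          ∃ (A : Matrix (Fin d) (Fin T) ℝ) (a0 : Fin d → ℝ) (U : Matrix (Fin d) (Fin d) ℝ),
            l21 A ^ 2 ≤ (T : ℝ) / γ ∧ (∑ j, a0 j ^ 2) ≤ 1 / β ∧ Uᵀ * U = 1 ∧
            v = ∑ t, ∑ i, (if s t i then (1 : ℝ) else -1) *
              l (y t i) ((fun j => A j t + a0 j) ⬝ᵥ Uᵀ.mulVec (x t i))}) / 2 ^ (∑ t, m t) ≤
      2 * c * (√((T : ℝ) / γ) + √(1 / β)) *
        √(∑ t, (m t : ℝ) * ((∑ i, ∑ j, x t i j ^ 2) / (m t : ℝ))) := by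
  have hbound := MultitaskHypothesis.rademacherAverage_loss_le (R := T / γ) (R₀ := 1 / β)
    (by positivity) (by positivity) (fun p : Σ t, Fin (m t) => p.1) (fun p => x p.1 p.2)
    fun p => hl (y p.1 p.2)
  have hdata : ∑ t, (m t : ℝ) * ((∑ i, ∑ j, x t i j ^ 2) / (m t : ℝ)) =
      ∑ p : Σ t, Fin (m t), ∑ j, x p.1 p.2 j ^ 2 := by
    rw [Fintype.sum_sigma]
    refine Finset.sum_congr rfl fun t _ => ?_
    simpa only [Fintype.card_fin] using card_mul_sum_div_card fun i => ∑ j, x t i j ^ 2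
  simp only [rademacherAverage_sigma, Fintype.card_fin] at hbound
  simp only [MultitaskHypothesis.sSup_setOf_eq_iSup, hdata, mul_div_assoc, mul_assoc]
  exact mul_le_mul_of_nonneg_left hbound zero_le_two

/-- if the loss l is c-admissible (Lipschitz in its second argument with
constant c, with l(y,0) = 0), then the (unnormalized) empirical Rademacher complexity of
the constrained loss class is at most 2c(√(T/γ) + √(1/β))√(∑ₜ mₜ S(Xₜ)), where
S(Xₜ) = (1/mₜ)∑ᵢ ‖x_{ti}‖₂². The Rademacher expectation is the average over all signs. -/
theorem loss_class_rademacher_bound {d T : ℕ} (γ β c : ℝ) (hγ : 0 < γ) (hβ : 0 < β)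
    (hc : 0 ≤ c) (l : ℝ → ℝ → ℝ)
    (hadm : ∀ y s s' : ℝ, |l y s - l y s'| ≤ c * |s - s'|)
    (hl0 : ∀ y : ℝ, l y 0 = 0)
    (m : Fin T → ℕ) (x : (t : Fin T) → Fin (m t) → Fin d → ℝ)
    (y : (t : Fin T) → Fin (m t) → ℝ) :
    2 * (∑ s : (t : Fin T) → Fin (m t) → Bool,
        sSup {v : ℝ |
          ∃ (A : Matrix (Fin d) (Fin T) ℝ) (a0 : Fin d → ℝ) (U : Matrix (Fin d) (Fin d) ℝ),
            l21 A ^ 2 ≤ (T : ℝ) / γ ∧ (∑ j, a0 j ^ 2) ≤ 1 / β ∧ Uᵀ * U = 1 ∧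
            v = ∑ t, ∑ i, (if s t i then (1 : ℝ) else -1) *
              l (y t i) ((fun j => A j t + a0 j) ⬝ᵥ Uᵀ.mulVec (x t i))}) / 2 ^ (∑ t, m t) ≤
      2 * c * (Real.sqrt ((T : ℝ) / γ) + Real.sqrt (1 / β)) *
        Real.sqrt (∑ t, (m t : ℝ) * ((∑ i, ∑ j, x t i j ^ 2) / (m t : ℝ))) := by
  lift c to ℝ≥0 using hc
  exact loss_class_rademacher_bound_general hγ hβ
    (fun y => LipschitzWith.of_dist_le_mul (hadm y)) m x y
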